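/- arXiv:2504.13282 — 3 statements merged into one kernel-verified Lean document; each statement's English description precedes it below -/
import Mathlib

section
/- Setting the logits z k = log (Pt k) for each class k, the negative log source posterior admits the logit-adjusted softmax form: -log (Ps j) = -log ( exp(z j + log (πs j) + log (ζ j)) / ∑ k, exp(z k + log (πs k) + log (ζ k)) ) for every class index j. -/
open Real

/-- With logits `z k = log (Pt k)`, the negative log source posterior admits the
logit-adjusted softmax form. -/
theorem neg_log_source_posterior_logit_adjusted
    (K : ℕ) (hK : 1 ≤ K)
    (fs ft πs : Fin K → ℝ)
    (hfs : ∀ k, 0 < fs k) (hft : ∀ k, 0 < ft k) (hπs : ∀ k, 0 < πs k)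
    (Ps Pt ζ z : Fin K → ℝ)
    (hPs : ∀ j, Ps j = fs j * πs j / (∑ k, fs k * πs k))
    (hPt : ∀ j, Pt j = ft j / (∑ k, ft k))
    (hζ : ∀ j, ζ j = fs j / ft j)
    (hz : ∀ k, z k = Real.log (Pt k)) :
    ∀ j, -Real.log (Ps j) =
      -Real.log (Real.exp (z j + Real.log (πs j) + Real.log (ζ j)) /
        ∑ k, Real.exp (z k + Real.log (πs k) + Real.log (ζ k))) := by
  intro j
  have hS : 0 < ∑ k, ft k := Finset.sum_pos (fun k _ => hft k) ⟨j, Finset.mem_univ j⟩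
  have key : ∀ k, Real.exp (z k + Real.log (πs k) + Real.log (ζ k))
      = fs k * πs k / (∑ i, ft i) := by
    intro k
    have h1 : 0 < Pt k := by rw [hPt]; exact div_pos (hft k) hS
    have h2 : 0 < ζ k := by rw [hζ]; exact div_pos (hfs k) (hft k)
    rw [Real.exp_add, Real.exp_add, hz, Real.exp_log h1, Real.exp_log (hπs k),
      Real.exp_log h2, hPt, hζ]
    have h3 := (hft k).ne'
    have h4 := hS.ne'
    field_simp
  simp only [key]
  rw [← Finset.sum_div, div_div_div_cancel_right₀ hS.ne', hPs]
end

section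
/- The loss on class j is strictly decreasing in the density ratio of class j: if ζ ζ' : Fin K → ℝ are positive, ζ' j > ζ j, and ζ' k = ζ k for all k ≠ j, then L ζ' j < L ζ j. Consequently, overestimating the ratio ζ j (equivalently, underestimating the target class-conditional probability of class j) strictly underestimates the loss on class j. -/
/-- The loss on class `j` is strictly decreasing in the density ratio of class `j`:
overestimating `ζ j` strictly underestimates the loss on class `j`. -/
theorem loss_strictAnti_in_density_ratio
    (K : ℕ) (hK : 2 ≤ K) (j : Fin K)
    (w : Fin K → ℝ) (hw : ∀ k, 0 < w k)
    (Q L : (Fin K → ℝ) → Fin K → ℝ)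
    (hQ : ∀ ζ i, Q ζ i = w i * ζ i / (∑ k, w k * ζ k))
    (hL : ∀ ζ i, L ζ i = -Real.log (Q ζ i))
    (ζ ζ' : Fin K → ℝ)
    (hζ : ∀ k, 0 < ζ k) (hζ' : ∀ k, 0 < ζ' k)
    (hj : ζ j < ζ' j) (hne : ∀ k, k ≠ j → ζ' k = ζ k) :
    L ζ' j < L ζ j := by
  have hw' := hw j
  have hz := hζ j
  have hz' := hζ' j
  have e : ∑ k, w k * ζ k = w j * ζ j + ∑ k ∈ Finset.univ.erase j, w k * ζ k :=
    (Finset.add_sum_erase _ (fun k => w k * ζ k) (Finset.mem_univ j)).symm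
  have e' : ∑ k, w k * ζ' k = w j * ζ' j + ∑ k ∈ Finset.univ.erase j, w k * ζ k := by
    rw [← Finset.add_sum_erase _ (fun k => w k * ζ' k) (Finset.mem_univ j)]
    congr 1
    refine Finset.sum_congr rfl fun k hk => ?_
    rw [hne k (Finset.ne_of_mem_erase hk)]
  have hR : 0 < ∑ k ∈ Finset.univ.erase j, w k * ζ k := by
    apply Finset.sum_pos (fun k _ => mul_pos (hw k) (hζ k))
    rw [← Finset.card_pos, Finset.card_erase_of_mem (Finset.mem_univ j), Finset.card_univ,
      Fintype.card_fin]
    omega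
  rw [hL, hL, hQ, hQ, e, e']
  generalize ∑ k ∈ Finset.univ.erase j, w k * ζ k = R at hR
  apply neg_lt_neg
  apply Real.log_lt_log (by positivity)
  rw [div_lt_div_iff₀ (by positivity) (by positivity)]
  have h1 : w j * ζ j * R < w j * ζ' j * R := by gcongr
  nlinarith
end

section
/- Underestimating the target class-conditional density of class j strictly underestimates the loss on class j: fix c > 0 (the source class-conditional density fs j of class j at the feature point) and positive values ζ k for k ≠ j; for t > 0 let ζ_t : Fin K → ℝ be given by ζ_t j = c / t and ζ_t k = ζ k for k ≠ j. Then the map t ↦ L ζ_t j is strictly increasing on (0, ∞); in particular, if 0 < t' < t then L ζ_{t'} j < L ζ_t j. -/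
/-- Underestimating the target class-conditional density of class `j` strictly
underestimates the loss on class `j`: the map `t ↦ L (ζ_t) j`, where
`ζ_t j = c / t` and `ζ_t k = ζ k` for `k ≠ j`, is strictly increasing on `(0, ∞)`;
in particular, if `0 < t' < t` then `L ζ_{t'} j < L ζ_t j`. -/
theorem loss_strictMono_in_underestimated_density
    (K : ℕ) (hK : 2 ≤ K) (j : Fin K)
    (w : Fin K → ℝ) (hw : ∀ k, 0 < w k)
    (Q L : (Fin K → ℝ) → Fin K → ℝ)
    (hQ : ∀ ζ i, Q ζ i = w i * ζ i / (∑ k, w k * ζ k))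
    (hL : ∀ ζ i, L ζ i = -Real.log (Q ζ i))
    (c : ℝ) (hc : 0 < c)
    (ζ : Fin K → ℝ) (hζ : ∀ k, k ≠ j → 0 < ζ k)
    (ζt : ℝ → Fin K → ℝ)
    (hζtj : ∀ t, ζt t j = c / t)
    (hζtk : ∀ t, ∀ k, k ≠ j → ζt t k = ζ k) :
    StrictMonoOn (fun t => L (ζt t) j) (Set.Ioi (0 : ℝ)) ∧
      ∀ t' t : ℝ, 0 < t' → t' < t → L (ζt t') j < L (ζt t) j := by
  have main : ∀ t' t : ℝ, 0 < t' → t' < t → L (ζt t') j < L (ζt t) j := by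
    intro a b ha hab
    have hb : 0 < b := ha.trans hab
    obtain ⟨S, hS⟩ : ∃ S, S = ∑ k ∈ Finset.univ.erase j, w k * ζ k := ⟨_, rfl⟩
    have hSpos : 0 < S := by
      rw [hS]
      apply Finset.sum_pos
      · intro k hk
        exact mul_pos (hw k) (hζ k (Finset.ne_of_mem_erase hk))
      · rw [← Finset.card_pos, Finset.card_erase_of_mem (Finset.mem_univ j),
          Finset.card_univ, Fintype.card_fin]
        omega
    have hsum : ∀ t, ∑ k, w k * ζt t k = w j * (c / t) + S := by
      intro t
      rw [← Finset.add_sum_erase _ _ (Finset.mem_univ j), hζtj, hS]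
      congr 1
      apply Finset.sum_congr rfl
      intro k hk
      rw [hζtk t k (Finset.ne_of_mem_erase hk)]
    rw [hL, hL, hQ, hQ, hsum, hsum, hζtj, hζtj]
    have hxb : 0 < w j * (c / b) := mul_pos (hw j) (div_pos hc hb)
    have hlt : w j * (c / b) < w j * (c / a) :=
      mul_lt_mul_of_pos_left (div_lt_div_of_pos_left hc ha hab) (hw j)
    have hxa := hxb.trans hlt
    apply neg_lt_neg
    apply Real.log_lt_log
    · positivity
    · rw [div_lt_div_iff₀ (by positivity) (by positivity)]
      nlinarith
  exact ⟨fun a ha b _ hab => main a b ha hab, main⟩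
end
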